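/- arXiv:0710.5350 — 4 statements merged into one kernel-verified Lean document; each statement's English description precedes it below -/
import Mathlib

section
/- A positive semidefinite 16×16 complex matrix ρ on the four-qubit space (order A',B',A'',B'') commutes with σ_k⊗σ_k⊗I₂⊗I₂ and with I₂⊗I₂⊗σ_k⊗σ_k for every k ∈ {x,y,z} if and only if there exist nonnegative reals r_{ij} (1 ≤ i,j ≤ 4) such that ρ = Σ_{i,j} r_{ij} Π_i⊗Π_j, where the first Bell projector acts on the qubits A'B' and the second on A''B''. -/
open Matrix Complex
open scoped Kronecker ComplexOrder

noncomputable section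
namespace Paper

abbrev Q2 := Fin 2 × Fin 2
abbrev M4 := Matrix Q2 Q2 ℂ
abbrev M16 := Matrix (Q2 × Q2) (Q2 × Q2) ℂ

/-- `1/√2` as a complex number. -/
def invSqrt2 : ℂ := ((Real.sqrt 2)⁻¹ : ℝ)

/-- The four Bell states `|Φ₁⟩,…,|Φ₄⟩` as vectors in `ℂ²⊗ℂ²`
(product basis indexed by `Fin 2 × Fin 2`). -/
def bell : Fin 4 → Q2 → ℂ :=
  ![fun p => !![invSqrt2, 0; 0, invSqrt2] p.1 p.2,
    fun p => !![invSqrt2, 0; 0, -invSqrt2] p.1 p.2,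
    fun p => !![0, invSqrt2; invSqrt2, 0] p.1 p.2,
    fun p => !![0, invSqrt2; -invSqrt2, 0] p.1 p.2]

/-- The Bell projectors `Π_i = |Φ_i⟩⟨Φ_i|`. -/
def BellProj (i : Fin 4) : M4 := vecMulVec (bell i) (star (bell i))

/-- The Pauli matrices `σ_x, σ_y, σ_z`. -/
def pauli : Fin 3 → Matrix (Fin 2) (Fin 2) ℂ :=
  ![!![0, 1; 1, 0], !![0, -I; I, 0], !![1, 0; 0, -1]]

/-- Reindexing `((a',b'),(a'',b'')) ↦ ((a',a''),(b',b''))`. -/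
def swapMid : (Q2 × Q2) ≃ (Q2 × Q2) where
  toFun p := ((p.1.1, p.2.1), (p.1.2, p.2.2))
  invFun p := ((p.1.1, p.2.1), (p.1.2, p.2.2))
  left_inv _ := rfl
  right_inv _ := rfl

/-- The rank-one matrix `x x†`. -/
def pureMat {d : Type*} (x : d → ℂ) : Matrix d d ℂ := vecMulVec x (star x)

/-- Separability of a 16×16 four-qubit matrix (qubit order A',B',A'',B'')
across the partition A = (A',A''), B = (B',B''). -/
def SepAB (ρ : M16) : Prop :=
  ∃ (n : ℕ) (x y : Fin n → Q2 → ℂ),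
    (Matrix.reindex swapMid swapMid ρ) = ∑ k, (pureMat (x k)) ⊗ₖ (pureMat (y k))


lemma isq : invSqrt2 * invSqrt2 = 1/2 := by
  unfold invSqrt2
  rw [← Complex.ofReal_mul, ← mul_inv, Real.mul_self_sqrt (by norm_num)]
  norm_num

lemma istar : (starRingEnd ℂ) invSqrt2 = invSqrt2 := by
  unfold invSqrt2
  exact Complex.conj_ofReal _

/-- Eigenvalue signs. -/
def sg : Fin 4 → Fin 3 → ℂ := ![![1, -1, 1], ![-1, 1, 1], ![1, 1, -1], ![-1, -1, -1]]

lemma proj_formula (i : Fin 4) : BellProj i =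
    (1/4 : ℂ) • ((1 : M4) + ∑ k, sg i k • (pauli k ⊗ₖ pauli k)) := by
  ext ⟨a, b⟩ ⟨c, d⟩
  fin_cases i <;> fin_cases a <;> fin_cases b <;> fin_cases c <;> fin_cases d <;>
    simp [BellProj, bell, vecMulVec_apply, istar, isq, sg, Fin.sum_univ_three, pauli,
      Matrix.one_apply] <;> norm_num

lemma proj_sum : ∑ i, BellProj i = 1 := by
  ext ⟨a, b⟩ ⟨c, d⟩
  fin_cases a <;> fin_cases b <;> fin_cases c <;> fin_cases d <;>
    simp [BellProj, bell, vecMulVec_apply, istar, isq, Fin.sum_univ_four, Matrix.one_apply] <;>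
    norm_num

lemma pauli_comm (k l : Fin 3) : (pauli k ⊗ₖ pauli k) * (pauli l ⊗ₖ pauli l) =
    (pauli l ⊗ₖ pauli l) * (pauli k ⊗ₖ pauli k) := by
  rw [← mul_kronecker_mul, ← mul_kronecker_mul]
  ext ⟨a, b⟩ ⟨c, d⟩
  fin_cases k <;> fin_cases l <;>
  fin_cases a <;> fin_cases b <;> fin_cases c <;> fin_cases d <;>
    simp [pauli]

lemma proj_comm (i : Fin 4) (k : Fin 3) :
    Commute (BellProj i) (pauli k ⊗ₖ pauli k) := by
  rw [proj_formula]
  refine Commute.smul_left (Commute.add_left (Commute.one_left _) ?_) _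
  exact Commute.sum_left _ _ _ fun l _ => Commute.smul_left (pauli_comm l k) _

lemma bell_dot (i : Fin 4) : star (bell i) ⬝ᵥ bell i = 1 := by
  fin_cases i <;> simp [bell, dotProduct, Fintype.sum_prod_type, istar, isq] <;> norm_num

lemma proj_idem (i : Fin 4) : BellProj i * BellProj i = BellProj i := by
  simp only [BellProj]
  rw [vecMulVec_mul_vecMulVec, bell_dot]
  simp

/-- Product Bell vector. -/
def bb (i j : Fin 4) : Q2 × Q2 → ℂ := fun p => bell i p.1 * bell j p.2

lemma kron_eq (i j : Fin 4) :
    BellProj i ⊗ₖ BellProj j = vecMulVec (bb i j) (star (bb i j)) := by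
  ext p q
  simp [BellProj, bb, vecMulVec_apply, kroneckerMap_apply]
  ring

/-- A PSD 16×16 four-qubit matrix (order A',B',A'',B'') commutes with
`σ_k⊗σ_k⊗I⊗I` and `I⊗I⊗σ_k⊗σ_k` for all Pauli `σ_k` iff it is a nonnegative
combination of the matrices `Π_i ⊗ Π_j`. -/
theorem stmt1 (ρ : M16) (hρ : ρ.PosSemidef) :
    (∀ k : Fin 3,
        ρ * ((pauli k ⊗ₖ pauli k) ⊗ₖ (1 : M4)) = ((pauli k ⊗ₖ pauli k) ⊗ₖ (1 : M4)) * ρ ∧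
        ρ * ((1 : M4) ⊗ₖ (pauli k ⊗ₖ pauli k)) = ((1 : M4) ⊗ₖ (pauli k ⊗ₖ pauli k)) * ρ) ↔
      ∃ r : Fin 4 → Fin 4 → ℝ, (∀ i j, 0 ≤ r i j) ∧
        ρ = ∑ i, ∑ j, (r i j : ℂ) • (BellProj i ⊗ₖ BellProj j) := by
  constructor
  · intro h
    have h1 : ∀ i, Commute ρ (BellProj i ⊗ₖ (1 : M4)) := by
      intro i
      have e : BellProj i ⊗ₖ (1 : M4) = (1/4 : ℂ) • ((1 : M16) +
          ∑ k, sg i k • ((pauli k ⊗ₖ pauli k) ⊗ₖ (1 : M4))) := by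
        rw [proj_formula]
        simp only [Fin.sum_univ_three, smul_kronecker, add_kronecker, one_kronecker_one]
      rw [e]
      refine Commute.smul_right (Commute.add_right (Commute.one_right _) ?_) _
      exact Commute.sum_right _ _ _ fun l _ => Commute.smul_right (h l).1 _
    have h2 : ∀ i, Commute ρ ((1 : M4) ⊗ₖ BellProj i) := by
      intro i
      have e : (1 : M4) ⊗ₖ BellProj i = (1/4 : ℂ) • ((1 : M16) +
          ∑ k, sg i k • ((1 : M4) ⊗ₖ (pauli k ⊗ₖ pauli k))) := by
        rw [proj_formula]
        simp only [Fin.sum_univ_three, kronecker_smul, kronecker_add, one_kronecker_one]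
      rw [e]
      refine Commute.smul_right (Commute.add_right (Commute.one_right _) ?_) _
      exact Commute.sum_right _ _ _ fun l _ => Commute.smul_right (h l).2 _
    have h3 : ∀ i j, Commute ρ (BellProj i ⊗ₖ BellProj j) := by
      intro i j
      have := (h1 i).mul_right (h2 j)
      rwa [← mul_kronecker_mul, mul_one, one_mul] at this
    have hone : (1 : M16) = ∑ i, ∑ j, BellProj i ⊗ₖ BellProj j := by
      rw [← one_kronecker_one, ← proj_sum]
      simp only [Fin.sum_univ_four, kronecker_add, add_kronecker]
      abel
    have hc : ∀ i j, 0 ≤ star (bb i j) ⬝ᵥ (ρ *ᵥ bb i j) := fun i j =>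
      hρ.dotProduct_mulVec_nonneg _
    refine ⟨fun i j => (star (bb i j) ⬝ᵥ (ρ *ᵥ bb i j)).re,
      fun i j => (Complex.le_def.1 (hc i j)).1, ?_⟩
    conv_lhs => rw [← mul_one ρ, hone]
    simp only [Finset.mul_sum]
    refine Finset.sum_congr rfl fun i _ => Finset.sum_congr rfl fun j _ => ?_
    have hre : (((star (bb i j) ⬝ᵥ (ρ *ᵥ bb i j)).re : ℝ) : ℂ)
        = star (bb i j) ⬝ᵥ (ρ *ᵥ bb i j) := by
      apply Complex.ext
      · simp
      · simpa using (Complex.le_def.1 (hc i j)).2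
    rw [hre]
    have idem : (BellProj i ⊗ₖ BellProj j) * (BellProj i ⊗ₖ BellProj j)
        = BellProj i ⊗ₖ BellProj j := by
      rw [← mul_kronecker_mul, proj_idem, proj_idem]
    have e : ρ * (BellProj i ⊗ₖ BellProj j)
        = (BellProj i ⊗ₖ BellProj j) * (ρ * (BellProj i ⊗ₖ BellProj j)) := by
      conv_lhs => rw [← idem, ← mul_assoc, (h3 i j).eq, mul_assoc]
    rw [e, kron_eq, mul_vecMulVec, vecMulVec_mul_vecMulVec]
    ext p q
    simp [vecMulVec_apply]
    try ring
  · rintro ⟨r, -, hr⟩ k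
    have key : ∀ X : M16, (∀ i j, Commute (BellProj i ⊗ₖ BellProj j) X) → ρ * X = X * ρ := by
      intro X hX
      rw [hr]
      simp only [Finset.sum_mul, Finset.mul_sum, smul_mul_assoc, mul_smul_comm, (hX _ _).eq]
    constructor
    · refine key _ fun i j => ?_
      change _ * _ = _ * _
      rw [← mul_kronecker_mul, ← mul_kronecker_mul, (proj_comm i k).eq, one_mul, mul_one]
    · refine key _ fun i j => ?_
      change _ * _ = _ * _
      rw [← mul_kronecker_mul, ← mul_kronecker_mul, (proj_comm j k).eq, one_mul, mul_one]

end Paper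
end
end

section
/- The 16×16 matrix D = (1/4)·Σ_{i=1}^4 Π_i⊗Π_i (first Bell projector on qubits A'B', second on A''B'') is separable across the partition A=(A',A''), B=(B',B''). -/
open Matrix Complex
open scoped Kronecker ComplexOrder

noncomputable section
namespace Paper

/-- Integer version of the Bell vectors. -/
def bellZ : Fin 4 → Q2 → ℤ :=
  ![fun p => !![1, 0; 0, 1] p.1 p.2,
    fun p => !![1, 0; 0, -1] p.1 p.2,
    fun p => !![0, 1; 1, 0] p.1 p.2,
    fun p => !![0, 1; -1, 0] p.1 p.2]

theorem bell_eq (i : Fin 4) (p : Q2) : bell i p = invSqrt2 * (bellZ i p : ℂ) := by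
  obtain ⟨a, b⟩ := p
  fin_cases i <;> fin_cases a <;> fin_cases b <;> simp [bell, bellZ]

theorem inv_mul : invSqrt2 * invSqrt2 = 1 / 2 := by
  unfold invSqrt2
  rw [← Complex.ofReal_mul, ← mul_inv, Real.mul_self_sqrt (by norm_num)]
  norm_num

theorem star_inv : star invSqrt2 = invSqrt2 := by
  simp [invSqrt2]

theorem bellProj_apply (i : Fin 4) (p q : Q2) :
    BellProj i p q = 1 / 2 * ((bellZ i p * bellZ i q : ℤ) : ℂ) := by
  have h : star (bellZ i q : ℂ) = bellZ i q := by simp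
  rw [← inv_mul, BellProj, vecMulVec_apply, Pi.star_apply, bell_eq, bell_eq, star_mul', star_inv, h]
  push_cast
  ring

theorem key : ∀ a b c d e f g h : Fin 2,
    ∑ i, (bellZ i (a, b) * bellZ i (c, d)) * (bellZ i (e, f) * bellZ i (g, h)) =
    ∑ i, (bellZ i (a, e) * bellZ i (c, g)) * (bellZ i (b, f) * bellZ i (d, h)) := by
  decide

theorem pure_half (i : Fin 4) : pureMat ((1 / 2 : ℂ) • bell i) = (1 / 4 : ℂ) • BellProj i := by
  ext p q
  simp [pureMat, BellProj, vecMulVec_apply]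
  ring

/-- The state `D = (1/4)·Σ_i Π_i ⊗ Π_i` is separable across the
partition A = (A',A''), B = (B',B''). -/
theorem stmt2 :
    SepAB ((1 / 4 : ℂ) • ∑ i : Fin 4, BellProj i ⊗ₖ BellProj i) := by
  refine ⟨4, fun i => (1 / 2 : ℂ) • bell i, fun i => bell i, ?_⟩
  have hp : ∀ i, pureMat (bell i) = BellProj i := fun _ => rfl
  simp only [pure_half, hp]
  ext ⟨⟨a, b⟩, ⟨c, d⟩⟩ ⟨⟨e, f⟩, ⟨g, h⟩⟩
  have hk := congrArg (fun z : ℤ => (1 / 16 : ℂ) * z) (key a c e g b d f h)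
  simp only [Int.cast_sum, Finset.mul_sum] at hk
  simp only [reindex_apply, submatrix_apply, Matrix.smul_apply, Matrix.sum_apply, kroneckerMap_apply,
    bellProj_apply, smul_eq_mul, Finset.mul_sum, swapMid, Equiv.coe_fn_symm_mk]
  convert hk using 2 <;> push_cast <;> ring

end Paper
end
end

section
/- Let Z_w be a Hermitian matrix on ℂ^{d_A}⊗ℂ^{d_B}, let m,n ≥ 1, and let s be a subset of the m+n tensor factors of (ℂ^{d_A})^{⊗m}⊗(ℂ^{d_B})^{⊗n} (the first m factors are the A-factors, the last n are the B-factors). Suppose there exists a positive semidefinite matrix 𝒵 on (ℂ^{d_A})^{⊗m}⊗(ℂ^{d_B})^{⊗n} such that (π_A⊗π_B)·(I_{d_A}^{⊗(m−1)}⊗Z_w⊗I_{d_B}^{⊗(n−1)})·(π_A⊗π_B) = (π_A⊗π_B)·𝒵^{T_s}·(π_A⊗π_B), where Z_w acts on the last A-factor and the first B-factor, and π_A, π_B are the orthogonal projectors onto the symmetric subspaces of (ℂ^{d_A})^{⊗m} and (ℂ^{d_B})^{⊗n}. Then tr(Z_w ω) ≥ 0 for every matrix ω on ℂ^{d_A}⊗ℂ^{d_B}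 that is separable across the A:B cut. -/
open Matrix Complex
open scoped Kronecker ComplexOrder

noncomputable section
namespace Paper

/-- Separability of a matrix on `ℂ^{dA} ⊗ ℂ^{dB}` across the A:B cut. -/
def SepCut (dA dB : ℕ) (ω : Matrix (Fin dA × Fin dB) (Fin dA × Fin dB) ℂ) : Prop :=
  ∃ (N : ℕ) (x : Fin N → Fin dA → ℂ) (y : Fin N → Fin dB → ℂ),
    ω = ∑ k, (pureMat (x k)) ⊗ₖ (pureMat (y k))

/-- The unitary permuting the `m` tensor factors of `(ℂ^d)^{⊗m}` according to `σ`. -/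
def permMat (d m : ℕ) (σ : Equiv.Perm (Fin m)) :
    Matrix (Fin m → Fin d) (Fin m → Fin d) ℂ :=
  fun p q => if q = p ∘ σ then 1 else 0

/-- The orthogonal projector onto the symmetric subspace of `(ℂ^d)^{⊗m}`:
`(1/m!)·Σ_{σ ∈ S_m} P_σ`. -/
def symProj (d m : ℕ) : Matrix (Fin m → Fin d) (Fin m → Fin d) ℂ :=
  ((m.factorial : ℂ))⁻¹ • ∑ σ : Equiv.Perm (Fin m), permMat d m σ

/-- `I_{dA}^{⊗ m} ⊗ Z_w ⊗ I_{dB}^{⊗ n}` on `(ℂ^{dA})^{⊗(m+1)} ⊗ (ℂ^{dB})^{⊗(n+1)}`,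
with `Z_w` acting on the last A-factor and the first B-factor. -/
def bigZ (dA dB m n : ℕ) (Zw : Matrix (Fin dA × Fin dB) (Fin dA × Fin dB) ℂ) :
    Matrix ((Fin (m + 1) → Fin dA) × (Fin (n + 1) → Fin dB))
      ((Fin (m + 1) → Fin dA) × (Fin (n + 1) → Fin dB)) ℂ :=
  fun p q =>
    if (∀ i : Fin (m + 1), i ≠ Fin.last m → p.1 i = q.1 i) ∧
       (∀ j : Fin (n + 1), j ≠ 0 → p.2 j = q.2 j)
    then Zw (p.1 (Fin.last m), p.2 0) (q.1 (Fin.last m), q.2 0) else 0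

/-- Partial transpose in the A-factors belonging to `sA` and the B-factors
belonging to `sB`: the corresponding row and column indices are swapped. -/
def partialTransSet (dA dB m n : ℕ) (sA : Finset (Fin (m + 1))) (sB : Finset (Fin (n + 1)))
    (M : Matrix ((Fin (m + 1) → Fin dA) × (Fin (n + 1) → Fin dB))
      ((Fin (m + 1) → Fin dA) × (Fin (n + 1) → Fin dB)) ℂ) :
    Matrix ((Fin (m + 1) → Fin dA) × (Fin (n + 1) → Fin dB))
      ((Fin (m + 1) → Fin dA) × (Fin (n + 1) → Fin dB)) ℂ :=
  fun p q =>
    M (fun i => if i ∈ sA then q.1 i else p.1 i, fun j => if j ∈ sB then q.2 j else p.2 j)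
      (fun i => if i ∈ sA then p.1 i else q.1 i, fun j => if j ∈ sB then p.2 j else q.2 j)

def tp {d m : ℕ} (x : Fin m → Fin d → ℂ) (p : Fin m → Fin d) : ℂ := ∏ i, x i (p i)

lemma tp_perm {d m : ℕ} (x : Fin d → ℂ) (σ : Equiv.Perm (Fin m)) (p : Fin m → Fin d) :
    tp (fun _ => x) (p ∘ σ) = tp (fun _ => x) p := by
  unfold tp
  exact Equiv.prod_comp σ (fun i => x (p i))

lemma permMat_mulVec {d m : ℕ} (x : Fin d → ℂ) (σ : Equiv.Perm (Fin m)) :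
    permMat d m σ *ᵥ tp (fun _ => x) = tp (fun _ => x) := by
  ext p
  simp [permMat, mulVec, dotProduct, tp_perm]

lemma permMat_vecMul {d m : ℕ} (x : Fin d → ℂ) (σ : Equiv.Perm (Fin m)) :
    star (tp (fun _ => x)) ᵥ* permMat d m σ = star (tp (fun _ => x)) := by
  ext q
  have : ∀ p : Fin m → Fin d, (q = p ∘ σ) ↔ (p = q ∘ σ.symm) := by
    intro p
    constructor
    · rintro rfl
      ext i; simp
    · rintro rfl
      ext i; simp
  simp [permMat, vecMul, dotProduct, this, tp_perm]

lemma symProj_mulVec {d m : ℕ} (x : Fin d → ℂ) :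
    symProj d m *ᵥ tp (fun _ => x) = tp (fun _ => x) := by
  unfold symProj
  rw [smul_mulVec, sum_mulVec]
  have : (m.factorial : ℂ) ≠ 0 := by exact_mod_cast m.factorial_ne_zero
  simp only [permMat_mulVec, Finset.sum_const, Finset.card_univ, Fintype.card_perm,
    Fintype.card_fin]
  ext p
  simp [this]

lemma symProj_vecMul {d m : ℕ} (x : Fin d → ℂ) :
    star (tp (fun _ => x)) ᵥ* symProj d m = star (tp (fun _ => x)) := by
  unfold symProj
  rw [vecMul_smul, vecMul_sum]
  have : (m.factorial : ℂ) ≠ 0 := by exact_mod_cast m.factorial_ne_zero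
  simp only [permMat_vecMul, Finset.sum_const, Finset.card_univ, Fintype.card_perm,
    Fintype.card_fin]
  ext p
  simp [this]

def kv {a b : Type*} (u : a → ℂ) (v : b → ℂ) (p : a × b) : ℂ := u p.1 * v p.2

lemma kron_mulVec {a b : Type*} [Fintype a] [Fintype b] (A : Matrix a a ℂ) (B : Matrix b b ℂ)
    (u : a → ℂ) (v : b → ℂ) : (A ⊗ₖ B) *ᵥ kv u v = kv (A *ᵥ u) (B *ᵥ v) := by
  ext p
  simp only [mulVec, dotProduct, kv, kroneckerMap_apply, Fintype.sum_prod_type,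
    Finset.sum_mul_sum]
  refine Finset.sum_congr rfl fun i _ => Finset.sum_congr rfl fun j _ => by ring

lemma kron_vecMul {a b : Type*} [Fintype a] [Fintype b] (A : Matrix a a ℂ) (B : Matrix b b ℂ)
    (u : a → ℂ) (v : b → ℂ) : kv u v ᵥ* (A ⊗ₖ B) = kv (u ᵥ* A) (v ᵥ* B) := by
  ext p
  simp only [vecMul, dotProduct, kv, kroneckerMap_apply, Fintype.sum_prod_type,
    Finset.sum_mul_sum]
  refine Finset.sum_congr rfl fun i _ => Finset.sum_congr rfl fun j _ => by ring

lemma star_kv {a b : Type*} (u : a → ℂ) (v : b → ℂ) : star (kv u v) = kv (star u) (star v) := by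
  ext p; simp [kv]

lemma sandwich {dA dB m n : ℕ} (x : Fin dA → ℂ) (y : Fin dB → ℂ)
    (M : Matrix ((Fin m → Fin dA) × (Fin n → Fin dB)) ((Fin m → Fin dA) × (Fin n → Fin dB)) ℂ) :
    star (kv (tp fun _ : Fin m => x) (tp fun _ : Fin n => y)) ⬝ᵥ
      (((symProj dA m ⊗ₖ symProj dB n) * M * (symProj dA m ⊗ₖ symProj dB n)) *ᵥ
        kv (tp fun _ => x) (tp fun _ => y)) =
    star (kv (tp fun _ : Fin m => x) (tp fun _ : Fin n => y)) ⬝ᵥ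
      (M *ᵥ kv (tp fun _ => x) (tp fun _ => y)) := by
  rw [← mulVec_mulVec, ← mulVec_mulVec, kron_mulVec, symProj_mulVec, symProj_mulVec,
    dotProduct_mulVec, star_kv, kron_vecMul, symProj_vecMul, symProj_vecMul]

lemma quad_eq {a : Type*} [Fintype a] (M : Matrix a a ℂ) (u : a → ℂ) :
    star u ⬝ᵥ (M *ᵥ u) = ∑ z : a × a, M z.1 z.2 * (star (u z.1) * u z.2) := by
  simp only [mulVec, dotProduct, Fintype.sum_prod_type, Finset.mul_sum, Pi.star_apply]
  refine Finset.sum_congr rfl fun i _ => Finset.sum_congr rfl fun j _ => by ring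

def cj {d m : ℕ} (s : Finset (Fin m)) (x : Fin d → ℂ) (i : Fin m) : Fin d → ℂ :=
  if i ∈ s then star x else x

def sw {d m : ℕ} (s : Finset (Fin m)) (p q : Fin m → Fin d) : Fin m → Fin d :=
  fun i => if i ∈ s then q i else p i

lemma sw_sw {d m : ℕ} (s : Finset (Fin m)) (p q : Fin m → Fin d) :
    sw s (sw s p q) (sw s q p) = p := by
  ext i; simp only [sw]; split_ifs <;> rfl

lemma tp_sw {d m : ℕ} (s : Finset (Fin m)) (x : Fin d → ℂ) (p q : Fin m → Fin d) :
    star (tp (cj s x) (sw s p q)) * tp (cj s x) (sw s q p) =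
      star (tp (fun _ => x) p) * tp (fun _ => x) q := by
  simp only [tp, star_prod, ← Finset.prod_mul_distrib]
  refine Finset.prod_congr rfl fun i _ => ?_
  simp only [cj, sw]
  split_ifs
  · simp [mul_comm]
  · rfl

lemma pt_quad {dA dB m n : ℕ} (sA : Finset (Fin (m + 1))) (sB : Finset (Fin (n + 1)))
    (Z : Matrix ((Fin (m + 1) → Fin dA) × (Fin (n + 1) → Fin dB))
      ((Fin (m + 1) → Fin dA) × (Fin (n + 1) → Fin dB)) ℂ) (x : Fin dA → ℂ) (y : Fin dB → ℂ) :
    star (kv (tp fun _ => x) (tp fun _ => y)) ⬝ᵥ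
      (partialTransSet dA dB m n sA sB Z *ᵥ kv (tp fun _ => x) (tp fun _ => y)) =
    star (kv (tp (cj sA x)) (tp (cj sB y))) ⬝ᵥ
      (Z *ᵥ kv (tp (cj sA x)) (tp (cj sB y))) := by
  rw [quad_eq, quad_eq]
  let f : (((Fin (m + 1) → Fin dA) × (Fin (n + 1) → Fin dB)) ×
    ((Fin (m + 1) → Fin dA) × (Fin (n + 1) → Fin dB))) →
    (((Fin (m + 1) → Fin dA) × (Fin (n + 1) → Fin dB)) ×
    ((Fin (m + 1) → Fin dA) × (Fin (n + 1) → Fin dB))) := fun z =>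
    ((sw sA z.1.1 z.2.1, sw sB z.1.2 z.2.2), (sw sA z.2.1 z.1.1, sw sB z.2.2 z.1.2))
  have hf : Function.Involutive f := by
    intro z
    simp only [f, sw_sw]
  refine Fintype.sum_equiv hf.toPerm _ _ ?_
  rintro ⟨⟨p1, p2⟩, ⟨q1, q2⟩⟩
  have h1 := tp_sw sA x p1 q1
  have h2 := tp_sw sB y p2 q2
  simp only [Function.Involutive.coe_toPerm, f, kv, star_mul']
  rw [mul_mul_mul_comm, mul_mul_mul_comm (star (tp (cj sA x) _)), h1, h2]
  rfl

lemma sum_ins {d m : ℕ} (k : Fin (m + 1)) (F : (Fin (m + 1) → Fin d) → ℂ) :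
    ∑ p, F p = ∑ a, ∑ r : Fin m → Fin d, F (k.insertNth a r) := by
  rw [← Fintype.sum_prod_type' (f := fun a r => F (k.insertNth a r))]
  exact (Fintype.sum_equiv (Fin.insertNthEquiv (fun _ => Fin d) k) _ _ (fun _ => rfl)).symm

lemma tp_ins {d m : ℕ} (k : Fin (m + 1)) (x : Fin d → ℂ) (a : Fin d) (r : Fin m → Fin d) :
    tp (fun _ => x) (k.insertNth a r : Fin (m + 1) → Fin d) = x a * tp (fun _ => x) r := by
  simp [tp, Fin.prod_univ_succAbove _ k]

lemma cond_ins {d m : ℕ} (k : Fin (m + 1)) (a b : Fin d) (r t : Fin m → Fin d) :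
    (∀ i, i ≠ k → (k.insertNth a r : Fin (m + 1) → Fin d) i =
      (k.insertNth b t : Fin (m + 1) → Fin d) i) ↔ r = t := by
  rw [Fin.forall_iff_succAbove k]
  simp [funext_iff, Fin.succAbove_ne]

lemma norm_tp {d m : ℕ} (x : Fin d → ℂ) :
    ∑ r : Fin m → Fin d, star (tp (fun _ => x) r) * tp (fun _ => x) r =
      (∑ a, star (x a) * x a) ^ m := by
  rw [Fintype.sum_pow]
  simp [tp, star_prod, Finset.prod_mul_distrib]

/-- contraction of one side -/
lemma contract {d m : ℕ} (k : Fin (m + 1)) (x : Fin d → ℂ) (G : Fin d → Fin d → ℂ) :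
    ∑ p : Fin (m + 1) → Fin d, ∑ q : Fin (m + 1) → Fin d,
      (if ∀ i, i ≠ k → p i = q i then
        G (p k) (q k) * (star (tp (fun _ => x) p) * tp (fun _ => x) q) else 0) =
    (∑ a, star (x a) * x a) ^ m * ∑ a, ∑ b, G a b * (star (x a) * x b) := by
  simp only [sum_ins k, cond_ins, tp_ins, Fin.insertNth_apply_same, Finset.sum_ite_eq,
    Finset.mem_univ, if_true]
  rw [← norm_tp, Finset.mul_sum]
  refine Finset.sum_congr rfl fun a _ => ?_
  rw [Finset.sum_comm, Finset.mul_sum]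
  refine Finset.sum_congr rfl fun b _ => ?_
  rw [Finset.sum_mul]
  refine Finset.sum_congr rfl fun r _ => ?_
  rw [star_mul']
  ring

lemma big_quad {dA dB m n : ℕ} (Zw : Matrix (Fin dA × Fin dB) (Fin dA × Fin dB) ℂ)
    (x : Fin dA → ℂ) (y : Fin dB → ℂ) :
    star (kv (tp fun _ => x) (tp fun _ => y)) ⬝ᵥ
      (bigZ dA dB m n Zw *ᵥ kv (tp fun _ => x) (tp fun _ => y)) =
    (∑ a, star (x a) * x a) ^ m * (∑ a, star (y a) * y a) ^ n *
      (star (kv x y) ⬝ᵥ (Zw *ᵥ kv x y)) := by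
  have h1 : (star (kv x y) ⬝ᵥ (Zw *ᵥ kv x y)) = ∑ a, ∑ b,
      (∑ c, ∑ e, Zw (a, c) (b, e) * (star (y c) * y e)) * (star (x a) * x b) := by
    rw [quad_eq]
    simp only [Fintype.sum_prod_type, kv, Finset.sum_mul]
    refine Finset.sum_congr rfl fun a _ => ?_
    rw [Finset.sum_comm]
    refine Finset.sum_congr rfl fun b _ => Finset.sum_congr rfl fun c _ =>
      Finset.sum_congr rfl fun e _ => ?_
    rw [star_mul']
    ring
  rw [h1, mul_right_comm, ← contract (Fin.last m), quad_eq, Finset.sum_mul]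
  simp only [Fintype.sum_prod_type]
  refine Finset.sum_congr rfl fun p1 _ => ?_
  rw [Finset.sum_comm, Finset.sum_mul]
  refine Finset.sum_congr rfl fun q1 _ => ?_
  by_cases hc : ∀ i, i ≠ Fin.last m → p1 i = q1 i
  · rw [if_pos hc, mul_right_comm, mul_comm (∑ c, _), ← contract 0, Finset.sum_mul]
    refine Finset.sum_congr rfl fun p2 _ => ?_
    rw [Finset.sum_mul]
    refine Finset.sum_congr rfl fun q2 _ => ?_
    by_cases hd : ∀ j, j ≠ 0 → p2 j = q2 j
    · rw [if_pos hd]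
      simp only [bigZ, kv]
      rw [if_pos ⟨hc, hd⟩, star_mul']
      ring
    · rw [if_neg hd]
      simp only [bigZ]
      rw [if_neg (fun h => hd h.2)]
      simp
  · rw [if_neg hc, zero_mul]
    refine Finset.sum_eq_zero fun p2 _ => Finset.sum_eq_zero fun q2 _ => ?_
    simp only [bigZ]
    rw [if_neg (fun h => hc h.1), zero_mul]

lemma trace_pure {dA dB : ℕ} (Zw : Matrix (Fin dA × Fin dB) (Fin dA × Fin dB) ℂ)
    (x : Fin dA → ℂ) (y : Fin dB → ℂ) :
    (Zw * (pureMat x ⊗ₖ pureMat y)).trace = star (kv x y) ⬝ᵥ (Zw *ᵥ kv x y) := by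
  rw [quad_eq, Fintype.sum_prod_type]
  simp only [trace, diag, mul_apply]
  refine Finset.sum_congr rfl fun p _ => Finset.sum_congr rfl fun q _ => ?_
  simp only [kroneckerMap_apply, pureMat, vecMulVec_apply, kv, Pi.star_apply, star_mul']
  ring

lemma nsq_pos {d : ℕ} (x : Fin d → ℂ) (hx : x ≠ 0) : 0 < ∑ a, star (x a) * x a :=
  dotProduct_star_self_pos_iff.2 hx |>.trans_eq (by simp [dotProduct, mul_comm])

/-- if `(π_A⊗π_B)(I^{⊗m-1}⊗Z_w⊗I^{⊗n-1})(π_A⊗π_B) = (π_A⊗π_B) 𝒵^{T_s} (π_A⊗π_B)`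
for some PSD `𝒵` and some subset `s` of the tensor factors, then `Z_w` is an
entanglement witness: `tr(Z_w ω) ≥ 0` for every separable `ω`. -/
theorem stmt4 (dA dB m n : ℕ) (Zw : Matrix (Fin dA × Fin dB) (Fin dA × Fin dB) ℂ)
    (hZw : Zw.IsHermitian)
    (sA : Finset (Fin (m + 1))) (sB : Finset (Fin (n + 1)))
    (Z : Matrix ((Fin (m + 1) → Fin dA) × (Fin (n + 1) → Fin dB))
      ((Fin (m + 1) → Fin dA) × (Fin (n + 1) → Fin dB)) ℂ)
    (hZ : Z.PosSemidef)
    (heq :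
      (symProj dA (m + 1) ⊗ₖ symProj dB (n + 1)) * bigZ dA dB m n Zw *
          (symProj dA (m + 1) ⊗ₖ symProj dB (n + 1)) =
        (symProj dA (m + 1) ⊗ₖ symProj dB (n + 1)) * partialTransSet dA dB m n sA sB Z *
          (symProj dA (m + 1) ⊗ₖ symProj dB (n + 1))) :
    ∀ ω : Matrix (Fin dA × Fin dB) (Fin dA × Fin dB) ℂ,
      SepCut dA dB ω → 0 ≤ (Zw * ω).trace := by
  rintro ω ⟨N, x, y, rfl⟩
  rw [Finset.mul_sum, trace_sum]
  refine Finset.sum_nonneg fun k _ => ?_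
  rw [trace_pure]
  by_cases hx : x k = 0
  · have : kv (x k) (y k) = 0 := by ext p; simp [kv, hx]
    simp [this]
  by_cases hy : y k = 0
  · have : kv (x k) (y k) = 0 := by ext p; simp [kv, hy]
    simp [this]
  have h := congrArg (fun M => star (kv (tp fun _ : Fin (m + 1) => x k)
    (tp fun _ : Fin (n + 1) => y k)) ⬝ᵥ (M *ᵥ kv (tp fun _ => x k) (tp fun _ => y k))) heq
  simp only [sandwich, pt_quad, big_quad] at h
  have h2 := hZ.dotProduct_mulVec_nonneg (kv (tp (cj sA (x k))) (tp (cj sB (y k))))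
  rw [← h] at h2
  have hC := mul_pos (pow_pos (nsq_pos _ hx) m) (pow_pos (nsq_pos _ hy) n)
  have hC' := RCLike.inv_pos_of_pos hC
  have h3 := mul_nonneg hC'.le h2
  rwa [inv_mul_cancel_left₀ hC.ne'] at h3

end Paper
end
end

section
/- Let W_1 be the 4×4 matrix with rows (1,1,1,−1), (1,1,1,−1), (1,1,1,−1), (−1,−1,−1,1), and let Z_{w,1} = Σ_{i,j} [W_1]_{ij} Π_i⊗Π_j (first Bell projector on qubits A'B', second on A''B''). Then Z_{w,1} is decomposable with respect to the partition A=(A',A''), B=(B',B''): there exist positive semidefinite 16×16 matrices P and Q such that Z_{w,1} = P + Q^{T_B}, where T_B denotes the partial transpose over the indices of the qubits B' and B''. -/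
open Matrix Complex
open scoped Kronecker ComplexOrder

noncomputable section
namespace Paper

/-- Partial transpose over the qubits B' and B'' of a four-qubit matrix
(index order `((a',b'),(a'',b''))`): the row and column indices of the
B-factors are swapped in each entry. -/
def ptransposeB (M : M16) : M16 :=
  fun p q =>
    M ((p.1.1, q.1.2), (p.2.1, q.2.2)) ((q.1.1, p.1.2), (q.2.1, p.2.2))

/-- The witness matrix `W₁`. -/
def W1 : Matrix (Fin 4) (Fin 4) ℝ :=
  !![1, 1, 1, -1; 1, 1, 1, -1; 1, 1, 1, -1; -1, -1, -1, 1]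

/-- The swap operator as a signed sum of Bell projectors. -/
theorem swap_entry (p q : Q2) :
    BellProj 0 p q + BellProj 1 p q + BellProj 2 p q - BellProj 3 p q
      = (if p.1 = q.2 then 1 else 0) * (if q.1 = p.2 then 1 else 0) := by
  have h : invSqrt2 * invSqrt2 = 1 / 2 := by
    have h2 : (Real.sqrt 2)⁻¹ * (Real.sqrt 2)⁻¹ = 1 / 2 := by
      rw [← mul_inv, Real.mul_self_sqrt (by norm_num)]; norm_num
    unfold invSqrt2
    rw [← Complex.ofReal_mul, h2]; norm_num
  have hs : (starRingEnd ℂ) invSqrt2 = invSqrt2 := Complex.conj_ofReal _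
  obtain ⟨a, b⟩ := p
  obtain ⟨c, d⟩ := q
  fin_cases a <;> fin_cases b <;> fin_cases c <;> fin_cases d <;>
    simp [BellProj, bell, vecMulVec_apply, hs, h] <;> norm_num

/-- Unnormalized maximally entangled vector across A:B. -/
def wvec : Q2 × Q2 → ℂ := fun p =>
  (if p.1.1 = p.1.2 then 1 else 0) * (if p.2.1 = p.2.2 then 1 else 0)

/-- `Z_{w,1} = Σ_{ij} [W₁]_{ij} Π_i⊗Π_j` is decomposable with respect to
the partition A = (A',A''), B = (B',B''): it equals `P + Q^{T_B}` with `P, Q ⪰ 0`. -/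
theorem stmt5 :
    ∃ P Q : M16, P.PosSemidef ∧ Q.PosSemidef ∧
      (∑ i, ∑ j, (W1 i j : ℂ) • (BellProj i ⊗ₖ BellProj j)) = P + ptransposeB Q := by
  refine ⟨0, vecMulVec wvec (star wvec), PosSemidef.zero,
    posSemidef_vecMulVec_self_star wvec, ?_⟩
  ext p q
  have e : (∑ i, ∑ j, (W1 i j : ℂ) • (BellProj i ⊗ₖ BellProj j)) p q
      = (BellProj 0 p.1 q.1 + BellProj 1 p.1 q.1 + BellProj 2 p.1 q.1 - BellProj 3 p.1 q.1)
        * (BellProj 0 p.2 q.2 + BellProj 1 p.2 q.2 + BellProj 2 p.2 q.2 - BellProj 3 p.2 q.2) := by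
    simp [Fin.sum_univ_four, W1, kroneckerMap_apply]
    ring
  rw [e, swap_entry, swap_entry]
  simp only [zero_add, ptransposeB, vecMulVec_apply, wvec, Pi.star_apply, star_mul', apply_ite star,
    star_one, star_zero]
  ring

end Paper
end
end
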